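/- Assume π and all elements of Γ are algebraic over K. For x ∈ K_v, if the digit sequence of the expansion of x with respect to (Γ, π) is p-automatic, then x is algebraic over K. -/

import Mathlib

/-!
Common setup: `Kv` is a complete field equipped with a (normalized, `ℤ`-valued)
valuation `Valued.v : Kv → ℤₘ₀ = WithZero (Multiplicative ℤ)`, and `K` is a dense
subfield of `Kv` (so that `Kv` is the completion `K_v` of `K`).  The valuation is
written multiplicatively: the additive valuation of `x` is `n` iff
`Valued.v x = ofAdd (-n)`; the valuation ring `A_v` is `{x | Valued.v x ≤ 1}` and
`π A_v = {x | Valued.v x ≤ Valued.v π}`.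
-/

open scoped Multiplicative

/-- The multiplicative value monoid `ℤₘ₀` for normalized `ℤ`-valued valuations. -/
abbrev ZM0 : Type := WithZero (Multiplicative ℤ)

/-- A sequence `b : ℕ → α` is `k`-automatic if its `k`-kernel
`{ (b (n k^i + j))_n : i ≥ 0, 0 ≤ j < k^i }` is finite. -/
def IsKAutomatic {α : Type*} (k : ℕ) (b : ℕ → α) : Prop :=
  {c : ℕ → α | ∃ i j : ℕ, j < k ^ i ∧ c = fun n => b (n * k ^ i + j)}.Finite

/-- The sequence `{a n}_{n ≥ m}` is ultimately periodic: there are `N ≥ m` and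
`L > 0` with `a (n + L) = a n` for all `n ≥ N`. -/
def UltimatelyPeriodic {α : Type*} (m : ℤ) (a : ℤ → α) : Prop :=
  ∃ N L : ℤ, m ≤ N ∧ 0 < L ∧ ∀ n : ℤ, N ≤ n → a (n + L) = a n

variable {Kv : Type*} [Field Kv] [Valued Kv ZM0]

/-- `x = ∑_{n ≥ m} a_n π^n` is the expansion of `x` with respect to `(Γ, π)`:
all digits `a n` for `n ≥ m` lie in `Γ` and the series converges to `x`. -/
def IsExpansion (π : Kv) (Γ : Set Kv) (m : ℤ) (a : ℤ → Kv) (x : Kv) : Prop :=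
  (∀ n : ℤ, m ≤ n → a n ∈ Γ) ∧
    HasSum (fun n : ℕ => a (m + n) * π ^ (m + (n : ℤ))) x

/-- `Γ ⊆ A_v` is a complete set of representatives of `A_v / π A_v`: reduction
modulo `π A_v` maps `Γ` bijectively onto `A_v / π A_v`. -/
def IsCompleteSetOfReps (π : Kv) (Γ : Set Kv) : Prop :=
  (∀ γ ∈ Γ, Valued.v γ ≤ 1) ∧
    ∀ x : Kv, Valued.v x ≤ 1 → ∃! γ, γ ∈ Γ ∧ Valued.v (x - γ) ≤ Valued.v π

/-- `(Γ, π)` has property A: for every `x ∈ K_v`, `x` is rational (i.e. `x ∈ K`)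
iff the digit sequence of the expansion of `x` w.r.t. `(Γ, π)` is ultimately
periodic. -/
def HasPropertyA (K : Subfield Kv) (π : Kv) (Γ : Set Kv) : Prop :=
  ∀ (x : Kv) (m : ℤ) (a : ℤ → Kv), IsExpansion π Γ m a x →
    (x ∈ K ↔ UltimatelyPeriodic m a)

/-- `(Γ, π)` has property B: for every `x ∈ K_v`, `x` is algebraic over `K` iff
the digit sequence of the expansion of `x` w.r.t. `(Γ, π)` is `p`-automatic. -/
def HasPropertyB (p : ℕ) (K : Subfield Kv) (π : Kv) (Γ : Set Kv) : Prop :=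
  ∀ (x : Kv) (m : ℤ) (a : ℤ → Kv), IsExpansion π Γ m a x →
    (IsAlgebraic ↥K x ↔ IsKAutomatic p fun n : ℕ => a (m + n))

/-- The degree `[S : F]` of a subset `S ⊆ Kv` over a subfield `F ⊆ Kv` (intended
for `F ⊆ S` with `S` a field): the rank of the `F`-span of `S` in `Kv`. -/
noncomputable def degOver (F : Subfield Kv) (S : Set Kv) : Cardinal :=
  Module.rank ↥F ↥(Submodule.span ↥F S)

/-- `Kv` is the completion of a global function field `K` of characteristic `p`
with respect to a normalized nontrivial valuation:  `Kv` has characteristic `p`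
and is complete, `K` is dense in `Kv`, the valuation takes every value `ofAdd n`
(`n ∈ ℤ`) on `K` (normalization/nontriviality), and `K` contains an element `x₀`
transcendental over the prime field `𝔽_p = ⊥` with `[K : 𝔽_p(x₀)] < ∞`. -/
structure IsGlobalFunctionFieldCompletion (p : ℕ) (K : Subfield Kv) : Prop where
  charP : CharP Kv p
  complete : CompleteSpace Kv
  dense : Dense (K : Set Kv)
  normalized : ∀ n : ℤ, ∃ x ∈ K,
    Valued.v x = ((Multiplicative.ofAdd n : Multiplicative ℤ) : ZM0)
  globalFunctionField : ∃ x₀ ∈ K, Transcendental (⊥ : Subfield Kv) x₀ ∧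
    degOver (Subfield.closure {x₀}) (K : Set Kv) < Cardinal.aleph0

/-- The constant field `𝔽_q` of `K`: the algebraic closure of `𝔽_p` in `K`,
i.e. the elements of `K` fixed by some positive power of the Frobenius. -/
def ConstantField (p : ℕ) (K : Subfield Kv) : Set Kv :=
  {x : Kv | x ∈ K ∧ ∃ n : ℕ, 0 < n ∧ x ^ p ^ n = x}

/-- The subfield `𝔽_q(π)` of `Kv` generated by `π` over the constant field. -/
def FqPi (p : ℕ) (K : Subfield Kv) (π : Kv) : Subfield Kv :=
  Subfield.closure (ConstantField p K ∪ {π})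

/-- `𝔽_q((π))`: the completion of `𝔽_q(π)`, i.e. its closure in `Kv`. -/
noncomputable def FqPiCompletion (p : ℕ) (K : Subfield Kv) (π : Kv) : Subfield Kv :=
  (FqPi p K π).topologicalClosure

/-!
The argument is the easy half of Christol's theorem. For a sequence `c` in a ring of
characteristic `p` write `F c = ∑ c n π ^ n`. If the terms of `c` are fixed by Frobenius, then
splitting the sum into residue classes modulo `p` gives
`F c = ∑ j < p, π ^ j * F (n ↦ c (p n + j)) ^ p`. So if `c` is automatic, the finitely many values
of `F` on its kernel lie in the span of their own `p`-th powers, over any field `L` containing `π`.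
Iterating, `F c ^ p ^ i` for `0 ≤ i ≤ N` all lie in a space spanned by `N` elements, where `N` is
the size of the kernel, and a linear relation among them is a polynomial equation for `F c`.
An automatic sequence takes finitely many values, so an arbitrary one is reduced to the indicator
sequences of its values, whose terms `0` and `1` are fixed by Frobenius.
-/

open Filter Set Topology UniformSpace

section AutomaticKernel

variable {α β : Type*} {k : ℕ}

/-- The `k`-kernel of the sequence `b`, so that `IsKAutomatic k b` unfolds to its finiteness. -/
def automaticKernel (k : ℕ) (b : ℕ → α) : Set (ℕ → α) :=
  {c | ∃ i j : ℕ, j < k ^ i ∧ c = fun n => b (n * k ^ i + j)}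

theorem self_mem_automaticKernel (k : ℕ) (b : ℕ → α) : b ∈ automaticKernel k b :=
  ⟨0, 0, by simp, by simp⟩

theorem comp_add_mul_mem_automaticKernel {b c : ℕ → α} (hc : c ∈ automaticKernel k b) {j : ℕ}
    (hj : j < k) : (fun n => c (j + k * n)) ∈ automaticKernel k b := by
  obtain ⟨i, r, hr, rfl⟩ := hc
  refine ⟨i + 1, j * k ^ i + r, ?_, ?_⟩
  · calc j * k ^ i + r < (j + 1) * k ^ i := by rw [add_one_mul]; gcongr
      _ ≤ k * k ^ i := Nat.mul_le_mul_right _ hj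
      _ = k ^ (i + 1) := (pow_succ' k i).symm
  · exact funext fun n => congrArg b (by ring)

theorem range_subset_range_of_mem_automaticKernel {b c : ℕ → α} (hc : c ∈ automaticKernel k b) :
    range c ⊆ range b := by
  obtain ⟨i, j, -, rfl⟩ := hc
  exact range_comp_subset_range (fun n => n * k ^ i + j) b

theorem IsKAutomatic.comp {b : ℕ → α} (hb : IsKAutomatic k b) (φ : α → β) :
    IsKAutomatic k (φ ∘ b) := by
  refine (Set.Finite.image (φ ∘ ·) hb).subset ?_
  rintro _ ⟨i, j, hj, rfl⟩
  exact ⟨_, ⟨i, j, hj, rfl⟩, rfl⟩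

theorem IsKAutomatic.finite_range {b : ℕ → α} (hb : IsKAutomatic k b) (hk : 1 < k) :
    (range b).Finite := by
  refine (Set.Finite.image (fun c : ℕ → α => c 0) hb).subset ?_
  rintro _ ⟨n, rfl⟩
  exact ⟨_, ⟨n, n, Nat.lt_pow_self hk, rfl⟩, by simp⟩

end AutomaticKernel

section SpanPow

theorem linearIndependent_pow_of_transcendental {R A : Type*} [CommRing R] [Ring A] [Algebra R A]
    {x : A} (hx : Transcendental R x) : LinearIndependent R (fun n : ℕ => x ^ n) := by
  have aeval_basis : (Polynomial.aeval x).toLinearMap ∘ Polynomial.basisMonomials R =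
      fun n : ℕ => x ^ n := by
    funext n
    simp
  rw [← aeval_basis]
  exact (Polynomial.basisMonomials R).linearIndependent.map' _
    (LinearMap.ker_eq_bot.2 (transcendental_iff_injective.1 hx))

variable {R A ι : Type*} [CommRing R] [CommRing A] [Algebra R A]
  (p : ℕ) [ExpChar A p] {f : ι → A}

theorem span_pow_le_span_pow_succ
    (hf : ∀ d, f d ∈ Submodule.span R (range fun e => f e ^ p)) (i : ℕ) :
    Submodule.span R (range fun d => f d ^ p ^ i) ≤
      Submodule.span R (range fun d => f d ^ p ^ (i + 1)) := by
  rw [Submodule.span_le]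
  rintro _ ⟨d, rfl⟩
  obtain ⟨l, hl⟩ := Finsupp.mem_span_range_iff_exists_finsupp.1 (hf d)
  simp only [← hl, Finsupp.sum, sum_pow_char_pow, smul_pow, ← pow_mul, ← pow_succ']
  exact sum_mem fun e _ => Submodule.smul_mem _ _ (Submodule.subset_span ⟨e, rfl⟩)

theorem isAlgebraic_of_forall_mem_span_pow [Finite ι] [Nontrivial R] (hp : 1 < p)
    (hf : ∀ d, f d ∈ Submodule.span R (range fun e => f e ^ p)) (d : ι) :
    IsAlgebraic R (f d) := by
  classical
  have := Fintype.ofFinite ι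
  by_contra htranscendental
  let N := Fintype.card ι
  have pow_mem (i : Fin (N + 1)) :
      f d ^ p ^ (i : ℕ) ∈ Submodule.span R (range fun e => f e ^ p ^ N) :=
    monotone_nat_of_le_succ (span_pow_le_span_pow_succ p hf) (Nat.lt_succ_iff.1 i.2)
      (Submodule.subset_span ⟨d, rfl⟩)
  have independent : LinearIndependent R fun i : Fin (N + 1) => f d ^ p ^ (i : ℕ) :=
    (linearIndependent_pow_of_transcendental htranscendental).comp _
      ((Nat.pow_right_injective hp).comp Fin.val_injective)
  have card_le : N + 1 ≤ N := by
    calc N + 1 = Fintype.card (Fin (N + 1)) := (Fintype.card_fin _).symm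
      _ ≤ Fintype.card (range fun e => f e ^ p ^ N) :=
        linearIndependent_le_span_aux' _ independent _ (range_subset_iff.2 pow_mem)
      _ ≤ N := Fintype.card_range_le _
  exact absurd card_le (Nat.not_succ_le_self N)

end SpanPow

theorem tsum_pow_expChar {ι A : Type*} [CommSemiring A] [TopologicalSpace A] [ContinuousMul A]
    [T2Space A] (p : ℕ) [ExpChar A p] {f : ι → A} (hf : Summable f) :
    (∑' i, f i) ^ p = ∑' i, f i ^ p :=
  hf.map_tsum (frobenius A p) (continuous_pow p)

instance nonarchimedeanRing_of_valued {R Γ₀ : Type*} [Ring R]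
    [LinearOrderedCommGroupWithZero Γ₀] [Valued R Γ₀] : NonarchimedeanRing R := by
  have topology_eq : (inferInstance : TopologicalSpace R) =
      (Valued.v (R := R) (Γ₀ := Γ₀)).subgroups_basis.topology := by
    rw [Valued.toUniformSpace_eq R Γ₀]
    rfl
  convert (Valued.v (R := R) (Γ₀ := Γ₀)).subgroups_basis.nonarchimedean

section NonarchimedeanSeries

theorem tendsto_mul_pow_zero_of_finite_range {A : Type*} [MonoidWithZero A] [TopologicalSpace A]
    [ContinuousMul A] {π : A} (hπ : IsTopologicallyNilpotent π) {c : ℕ → A}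
    (hc : (range c).Finite) : Tendsto (fun n => c n * π ^ n) atTop (𝓝 0) := by
  intro s hs
  have eventually_mul_mem : ∀ᶠ n in atTop, ∀ γ ∈ range c, γ * π ^ n ∈ s :=
    hc.eventually_all.2 fun γ _ => by
      simpa only [mul_zero] using (Tendsto.const_mul γ hπ).eventually_mem (by rwa [mul_zero])
  exact eventually_mul_mem.mono fun n hn => hn (c n) (mem_range_self n)

variable {A : Type*} [CommRing A] [UniformSpace A] [IsUniformAddGroup A]
  [NonarchimedeanRing A] [CompleteSpace A] {π : A}

theorem summable_mul_pow_of_finite_range (hπ : IsTopologicallyNilpotent π) {c : ℕ → A}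
    (hc : (range c).Finite) :
    Summable fun n => c n * π ^ n :=
  NonarchimedeanAddGroup.summable_of_tendsto_cofinite_zero <|
    Nat.cofinite_eq_atTop ▸ tendsto_mul_pow_zero_of_finite_range hπ hc

variable [T0Space A]

theorem tsum_mul_pow_eq_sum_mul_tsum_pow (hπ : IsTopologicallyNilpotent π) (p : ℕ) [NeZero p]
    [ExpChar A p] {c : ℕ → A} (hc : (range c).Finite) (hfix : ∀ n, c n ^ p = c n) :
    ∑' n, c n * π ^ n =
      ∑ j : ZMod p, π ^ j.val * (∑' n, c (j.val + p * n) * π ^ n) ^ p := by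
  rw [Nat.sumByResidueClasses (summable_mul_pow_of_finite_range hπ hc) p]
  refine Finset.sum_congr rfl fun j _ => ?_
  have hsummable : Summable fun n => c (j.val + p * n) * π ^ n :=
    summable_mul_pow_of_finite_range hπ
      (hc.subset (range_comp_subset_range (fun n => j.val + p * n) c))
  have hsummable_pow : Summable fun n => (c (j.val + p * n) * π ^ n) ^ p :=
    hsummable.map (frobenius A p) (continuous_pow p)
  rw [tsum_pow_expChar p hsummable, ← hsummable_pow.tsum_mul_left]
  refine tsum_congr fun n => ?_
  rw [mul_pow, hfix]
  ring

theorem tsum_mul_pow_eq_sum_mul_tsum_indicator (hπ : IsTopologicallyNilpotent π) {c : ℕ → A}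
    (hc : (range c).Finite) :
    ∑' n, c n * π ^ n =
      ∑ γ ∈ hc.toFinset, γ * ∑' n, indicator {γ} (1 : A → A) (c n) * π ^ n := by
  classical
  have hsummable (γ : A) : Summable fun n => indicator {γ} (1 : A → A) (c n) * π ^ n :=
    summable_mul_pow_of_finite_range hπ
      ((hc.image (indicator {γ} 1)).subset (range_comp (indicator {γ} 1) c).subset)
  simp only [← (hsummable _).tsum_mul_left]
  rw [← Summable.tsum_finsetSum fun γ _ => (hsummable γ).mul_left γ]
  refine tsum_congr fun n => ?_
  simp [indicator_apply]

end NonarchimedeanSeries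

section Algebraicity

variable {L A : Type*} [CommRing L] [CommRing A] [Algebra L A] [UniformSpace A]
  [IsUniformAddGroup A] [NonarchimedeanRing A] [CompleteSpace A] [T0Space A]
  (p : ℕ) [Fact p.Prime] [CharP A p] {ϖ : L}

theorem isAlgebraic_tsum_of_isKAutomatic_of_pow_eq [Nontrivial L]
    (hϖ : IsTopologicallyNilpotent (algebraMap L A ϖ)) {c : ℕ → A} (hc : IsKAutomatic p c)
    (hfix : ∀ n, c n ^ p = c n) : IsAlgebraic L (∑' n, c n * algebraMap L A ϖ ^ n) := by
  have hp : p.Prime := Fact.out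
  have : Finite (automaticKernel p c) := hc
  refine isAlgebraic_of_forall_mem_span_pow p hp.one_lt
    (f := fun d : automaticKernel p c => ∑' n, d.1 n * algebraMap L A ϖ ^ n) ?_
    ⟨c, self_mem_automaticKernel p c⟩
  rintro ⟨d, hd⟩
  have range_subset := range_subset_range_of_mem_automaticKernel hd
  have hfix_d (n : ℕ) : d n ^ p = d n := by
    obtain ⟨k, hk⟩ := range_subset (mem_range_self n)
    rw [← hk, hfix]
  rw [tsum_mul_pow_eq_sum_mul_tsum_pow hϖ p ((hc.finite_range hp.one_lt).subset range_subset)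
    hfix_d]
  refine sum_mem fun j _ => ?_
  rw [← map_pow, ← Algebra.smul_def]
  exact Submodule.smul_mem _ _ <| Submodule.subset_span
    ⟨⟨_, comp_add_mul_mem_automaticKernel hd (ZMod.val_lt j)⟩, rfl⟩

theorem isAlgebraic_tsum_of_isKAutomatic [IsDomain L]
    (hϖ : IsTopologicallyNilpotent (algebraMap L A ϖ)) {c : ℕ → A} (hc : IsKAutomatic p c)
    (hcalg : ∀ n, IsAlgebraic L (c n)) :
    IsAlgebraic L (∑' n, c n * algebraMap L A ϖ ^ n) := by
  have hp : p.Prime := Fact.out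
  have hfin := hc.finite_range hp.one_lt
  rw [tsum_mul_pow_eq_sum_mul_tsum_indicator hϖ hfin, ← Subalgebra.mem_algebraicClosure]
  refine sum_mem fun γ hγ => mul_mem ?_ ?_
  · obtain ⟨n, rfl⟩ := hfin.mem_toFinset.1 hγ
    exact hcalg n
  · refine isAlgebraic_tsum_of_isKAutomatic_of_pow_eq p hϖ (hc.comp (indicator {γ} 1)) fun n => ?_
    by_cases h : c n = γ <;> simp [h, hp.ne_zero]

end Algebraicity

section Expansion

variable {K E : Type*} [Field K] [Field E] [Algebra K E] [UniformSpace E] [IsUniformAddGroup E]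
  [NonarchimedeanRing E] [T0Space E] (p : ℕ) [Fact p.Prime] [CharP E p] {π : E}

theorem isAlgebraic_of_hasSum_of_isKAutomatic (hπ : IsTopologicallyNilpotent π)
    (hπalg : IsAlgebraic K π) {b : ℕ → E} (hb : IsKAutomatic p b)
    (hbalg : ∀ n, IsAlgebraic K (b n)) {y : E} (hy : HasSum (fun n => b n * π ^ n) y) :
    IsAlgebraic K y := by
  let L := algebraicClosure K E
  let ϖ : L := ⟨π, mem_algebraicClosure_iff.2 hπalg⟩
  -- The indicator series of the values of `b` need not converge in `E` itself.
  let ι : E →+* Completion E := algebraMap E (Completion E)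
  have hι : Continuous ι := Completion.continuous_coe E
  have hι_injective : Function.Injective ι := Completion.coe_injective E
  have : CharP (Completion E) p := charP_of_injective_ringHom hι_injective p
  have halg : IsAlgebraic L (∑' n, ι (b n) * ι π ^ n) :=
    isAlgebraic_tsum_of_isKAutomatic p (ϖ := ϖ) (hπ.map hι) (hb.comp ι)
      fun n => ((hbalg n).tower_top L).algebraMap
  have hsum : ∑' n, ι (b n) * ι π ^ n = ι y := by
    simpa only [Function.comp_def, map_mul, map_pow] using (hy.map ι hι).tsum_eq
  rw [hsum] at halg
  exact ((isAlgebraic_algebraMap_iff hι_injective).1 halg).restrictScalars K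

theorem algebraic_of_automatic_expansion_general (hπ : IsTopologicallyNilpotent π) (hπ0 : π ≠ 0)
    (hπalg : IsAlgebraic K π) {m : ℤ} {a : ℤ → E} (haalg : ∀ n, m ≤ n → IsAlgebraic K (a n))
    (hauto : IsKAutomatic p fun n : ℕ => a (m + n)) {x : E}
    (hx : HasSum (fun n : ℕ => a (m + n) * π ^ (m + (n : ℤ))) x) : IsAlgebraic K x := by
  have hshift : HasSum (fun n : ℕ => a (m + n) * π ^ n) (π ^ (-m) * x) := by
    refine (hx.mul_left (π ^ (-m))).congr_fun fun n => ?_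
    rw [mul_left_comm, ← zpow_add₀ hπ0, neg_add_cancel_left, zpow_natCast]
  have hshift_alg : IsAlgebraic K (π ^ (-m) * x) :=
    isAlgebraic_of_hasSum_of_isKAutomatic p hπ hπalg hauto
      (fun n => haalg _ (le_add_of_nonneg_right n.cast_nonneg)) hshift
  have hzpow_alg : IsAlgebraic K (π ^ m) :=
    mem_algebraicClosure_iff.1 (zpow_mem (mem_algebraicClosure_iff.2 hπalg) m)
  simpa [← mul_assoc, zpow_ne_zero m hπ0] using hzpow_alg.mul hshift_alg

end Expansion

/-- **Lemma 3.2.** Assume `π` and all elements of `Γ` are algebraic over `K`.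
If the digit sequence of the expansion of `x ∈ K_v` with respect to `(Γ, π)` is
`p`-automatic, then `x` is algebraic over `K`. -/
theorem algebraic_of_automatic_expansion
    {Kv : Type*} [Field Kv] [Valued Kv ZM0]
    (p : ℕ) [Fact p.Prime] (K : Subfield Kv)
    (hK : IsGlobalFunctionFieldCompletion p K)
    (π : Kv) (hπ0 : π ≠ 0) (hπ : Valued.v π < 1)
    (Γ : Set Kv) (hΓ : IsCompleteSetOfReps π Γ)
    (hπalg : IsAlgebraic ↥K π) (hΓalg : ∀ γ ∈ Γ, IsAlgebraic ↥K γ)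
    (x : Kv) (m : ℤ) (a : ℤ → Kv) (hexp : IsExpansion π Γ m a x)
    (hauto : IsKAutomatic p fun n : ℕ => a (m + n)) :
    IsAlgebraic ↥K x := by
  have := hK.charP
  exact algebraic_of_automatic_expansion_general p (Valued.tendsto_zero_pow_of_v_lt_one hπ) hπ0
    hπalg (fun n hn => hΓalg _ (hexp.1 n hn)) hauto hexp.2
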